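/- Suppose the digraph is acyclic and the first n−1 edges form a rooted in-branching with root the vertex indexed n−1. If e_i is an edge with index i ≥ n−1 (a chord) and e_j is an edge with index j ≤ n−2 (a branch edge) such that tail e_i = tail e_j (they are sibling edges), then the entry R j i of the matrix R equals +1. -/

import Mathlib

open Matrix

/-- For an acyclic digraph whose first `n-1` edges form a rooted
in-branching with root the vertex `n-1`, if a chord `e_i` (with `i ≥ n-1`) and a branch
edge `e_j` (with `j ≤ n-2`) are sibling edges (same tail), then `R j i = 1`. -/
theorem R_entry_of_sibling_chord_eq_one
    (n m : ℕ) (hn : 2 ≤ n) (hm : 1 ≤ m) (hmn : n - 1 ≤ m)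
    (tail head : Fin m → Fin n) (hth : ∀ e, tail e ≠ head e)
    (w : Fin m → ℝ)
    (E : Matrix (Fin n) (Fin m) ℝ)
    (hE : ∀ v e, E v e = if v = tail e then 1 else if v = head e then -1 else 0)
    (hacyclic : ∀ v : Fin n,
      ¬ Relation.TransGen (fun a b => ∃ e, tail e = a ∧ head e = b) v v)
    (root : Fin n) (hroot : root = ⟨n - 1, by omega⟩)
    -- the first n-1 edges form a rooted in-branching with root `root`:
    (hinj : Function.Injective (fun i : Fin (n - 1) => tail ⟨i.val, lt_of_lt_of_le i.2 hmn⟩))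
    (hnotroot : ∀ i : Fin (n - 1), tail ⟨i.val, lt_of_lt_of_le i.2 hmn⟩ ≠ root)
    (hsurj : ∀ v : Fin n, v ≠ root → ∃ i : Fin (n - 1), tail ⟨i.val, lt_of_lt_of_le i.2 hmn⟩ = v)
    (hreach : ∀ v : Fin n, Relation.ReflTransGen
      (fun a b => ∃ e : Fin m, e.val < n - 1 ∧ tail e = a ∧ head e = b) v root)
    (Eτ : Matrix (Fin n) (Fin (n - 1)) ℝ)
    (hEτ : Eτ = E.submatrix id (fun i : Fin (n - 1) => ⟨i.val, lt_of_lt_of_le i.2 hmn⟩))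
    (Ec : Matrix (Fin n) (Fin (m - (n - 1))) ℝ)
    (hEc : Ec = E.submatrix id
      (fun j : Fin (m - (n - 1)) => ⟨n - 1 + j.val, by have := j.2; omega⟩))
    (Tτ : Matrix (Fin (n - 1)) (Fin (m - (n - 1))) ℝ)
    (hTτ : Tτ = (Eτᵀ * Eτ)⁻¹ * Eτᵀ * Ec)
    (R : Matrix (Fin (n - 1)) (Fin m) ℝ)
    (hR : ∀ (i : Fin (n - 1)) (j : Fin m), R i j =
      if h : j.val < n - 1 then (if i.val = j.val then 1 else 0)
      else Tτ i ⟨j.val - (n - 1), by have := j.2; omega⟩)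
    (i j : Fin m) (hi : n - 1 ≤ i.val) (hj : j.val < n - 1)
    (hsib : tail i = tail j) :
    R ⟨j.val, hj⟩ i = 1 := by
  set f : Fin (n-1) → Fin m := fun i => ⟨i.val, lt_of_lt_of_le i.2 hmn⟩ with hf
  have hE' : ∀ v e, E v e = (Pi.single (tail e) 1 - Pi.single (head e) 1 : Fin n → ℝ) v := by
    intro v e
    have := hth e
    rw [hE]
    simp only [Pi.sub_apply, Pi.single_apply]
    clear hR hTτ hreach
    split_ifs with h1 h2 h2
    · exact absurd (h1.symm.trans h2) this
    all_goals norm_num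
  have hcol : ∀ k, Eτ *ᵥ Pi.single k 1 = Pi.single (tail (f k)) 1 - Pi.single (head (f k)) 1 := by
    intro k
    ext v
    rw [Matrix.mulVec_single_one, hEτ]
    exact hE' v (f k)
  -- path vectors
  have hpath : ∀ v, ∃ x : Fin (n-1) → ℝ, Eτ *ᵥ x = Pi.single v 1 - Pi.single root 1 ∧
      ∀ k, x k ≠ 0 → Relation.ReflTransGen (fun a b => ∃ e, tail e = a ∧ head e = b) v (tail (f k)) := by
    intro v
    induction hreach v using Relation.ReflTransGen.head_induction_on with
    | refl => exact ⟨0, by simp, by simp⟩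
    | head h1 _ ih =>
      obtain ⟨e, he, rfl, rfl⟩ := h1
      obtain ⟨x, hx, hx'⟩ := ih
      refine ⟨Pi.single ⟨e.val, he⟩ 1 + x, ?_, ?_⟩
      · rw [Matrix.mulVec_add, hx, hcol]
        simp [hf]
      · intro k hk
        by_cases hke : k = ⟨e.val, he⟩
        · subst hke
          exact Relation.ReflTransGen.refl
        · simp [Pi.single_apply, hke] at hk
          exact Relation.ReflTransGen.head ⟨e, rfl, rfl⟩ (hx' k hk)
  have hinjE : ∀ z, Eτ *ᵥ z = 0 → z = 0 := by
    intro z hz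
    let r : Fin n → Fin n → Prop :=
      Relation.TransGen (fun a b => ∃ e, tail e = a ∧ head e = b)
    have : Std.Irrefl r := ⟨hacyclic⟩
    have : IsTrans (Fin n) r := ⟨fun _ _ _ h1 h2 => Relation.TransGen.trans h1 h2⟩
    have wf : WellFounded r := Finite.wellFounded_of_trans_of_irrefl r
    have key : ∀ v, ∀ k, tail (f k) = v → z k = 0 := by
      intro v
      induction v using wf.induction with
      | _ v ih =>
        intro k hk
        have h := congrFun hz v
        simp only [Matrix.mulVec, dotProduct, Pi.zero_apply] at h
        rw [Finset.sum_eq_single k] at h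
        · rw [hEτ] at h
          simp only [Matrix.submatrix_apply, id] at h
          rw [hE, if_pos hk.symm, one_mul] at h
          exact h
        · intro b _ hb
          rw [hEτ]
          simp only [Matrix.submatrix_apply, id]
          rw [hE]
          have h1 : v ≠ tail (f b) := fun h1 => hb (hinj (h1.symm.trans hk.symm))
          rw [if_neg h1]
          split_ifs with h2
          · rw [ih (tail (f b)) (Relation.TransGen.single ⟨f b, rfl, h2.symm⟩) b rfl, mul_zero]
          · simp
        · simp
    ext k
    exact key _ k rfl
  have hunit : IsUnit (Eτᵀ * Eτ) := by
    rw [← Matrix.mulVec_injective_iff_isUnit]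
    intro a b hab
    have h0 : (Eτᵀ * Eτ) *ᵥ (a - b) = 0 := by
      rw [Matrix.mulVec_sub]; exact sub_eq_zero.2 hab
    have h1 : Eτ *ᵥ (a - b) = 0 := by
      rw [← Matrix.conjTranspose_eq_transpose_of_trivial] at h0
      exact (Matrix.conjTranspose_mul_self_mulVec_eq_zero _ _).1 h0
    exact sub_eq_zero.1 (hinjE _ h1)
  obtain ⟨x, hx, hx'⟩ := hpath (head j)
  obtain ⟨x2, hx2, hx2'⟩ := hpath (head i)
  have hxj : x ⟨j.val, hj⟩ = 0 := by
    by_contra h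
    exact hacyclic (tail j) (Relation.TransGen.head' ⟨j, rfl, rfl⟩ (hx' _ h))
  have hx2j : x2 ⟨j.val, hj⟩ = 0 := by
    by_contra h
    exact hacyclic (tail j) (Relation.TransGen.head' ⟨i, hsib, rfl⟩ (hx2' _ h))
  rw [hR, dif_neg (by omega)]
  have hc : Ec *ᵥ Pi.single ⟨i.val - (n-1), by omega⟩ 1
      = Eτ *ᵥ (Pi.single ⟨j.val, hj⟩ 1 + x - x2) := by
    rw [Matrix.mulVec_sub, Matrix.mulVec_add, hx, hx2, hcol, Matrix.mulVec_single_one]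
    ext v
    have hi' : (⟨n - 1 + (i.val - (n-1)), by omega⟩ : Fin m) = i := by
      ext; simp; omega
    have : f ⟨j.val, hj⟩ = j := rfl
    rw [hEc]
    simp only [Matrix.col_apply, Matrix.submatrix_apply, id, hi', this, hE', Pi.sub_apply,
      Pi.add_apply, hsib]
    ring
  have hT : Tτ *ᵥ Pi.single ⟨i.val - (n-1), by omega⟩ 1
      = Pi.single ⟨j.val, hj⟩ 1 + x - x2 := by
    rw [hTτ, ← Matrix.mulVec_mulVec, hc, Matrix.mulVec_mulVec, Matrix.mul_assoc,
      Matrix.nonsing_inv_mul _ ((Matrix.isUnit_iff_isUnit_det _).1 hunit), Matrix.one_mulVec]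
  have := congrFun hT ⟨j.val, hj⟩
  rw [Matrix.mulVec_single_one] at this
  simpa [hxj, hx2j] using this
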